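/- Let (i,j) ∈ E be an edge of a finite connected simple graph G. Then the non-lazy Ollivier–Ricci curvature satisfies c_OR-0(i,j) ≥ −[𝔎(i,j) − Z_max(i,j) − 𝒮(i,j)]₊ − [𝔎(i,j) − Z_min(i,j) − 𝒮(i,j)]₊ + Z_max(i,j), where [x]₊ = max{0,x}. Moreover, this lower bound is nondecreasing as a function of 𝒮(i,j). -/

import Mathlib

namespace Curv

open Finset

noncomputable section

variable {V : Type*} [Fintype V] [DecidableEq V] (G : SimpleGraph V) [DecidableRel G.Adj]

/-- `μ` is a probability distribution on the (finite) vertex set. -/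
def IsProb (μ : V → ℝ) : Prop := (∀ x, 0 ≤ μ x) ∧ ∑ x, μ x = 1

/-- `π` is a coupling of `μ` and `ν`. -/
def IsCoupling (μ ν : V → ℝ) (π : V → V → ℝ) : Prop :=
  (∀ x y, 0 ≤ π x y) ∧ (∀ x, ∑ y, π x y = μ x) ∧ (∀ y, ∑ x, π x y = ν y)

/-- Transport cost of a plan `π` with respect to the shortest-path graph distance. -/
def cost (π : V → V → ℝ) : ℝ := ∑ x, ∑ y, (G.dist x y : ℝ) * π x y

/-- Wasserstein-1 distance between two distributions on the vertex set. -/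
def W1 (μ ν : V → ℝ) : ℝ := sInf {c : ℝ | ∃ π, IsCoupling μ ν π ∧ cost G π = c}

/-- Dirac mass at `u`. -/
def dirac (u : V) : V → ℝ := fun x => if x = u then 1 else 0

/-- Uniform distribution on the neighbours of `u`. -/
def unif (u : V) : V → ℝ := fun x => if G.Adj u x then ((G.degree u : ℝ))⁻¹ else 0

/-- Lazy random-walk measure with laziness parameter `α`. -/
def mGen (α : ℝ) (u : V) : V → ℝ := fun x => α * dirac u x + (1 - α) * unif G u x

/-- Canonical laziness `1/(deg u + 1)`. -/
def alphaL (u : V) : ℝ := ((G.degree u : ℝ) + 1)⁻¹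

/-- The lazy random-walk measure `m_u`. -/
def mLazy (u : V) : V → ℝ := mGen G (alphaL G u) u

/-- Ollivier–Ricci curvature (lazy). -/
def cOR (i j : V) : ℝ := 1 - W1 G (mLazy G i) (mLazy G j)

/-- Non-lazy Ollivier–Ricci curvature. -/
def cOR0 (i j : V) : ℝ := 1 - W1 G (unif G i) (unif G j)

/-- Positive part `[x]₊`. -/
def pos (x : ℝ) : ℝ := max x 0

/-- Triangle count `△(u,v)`. -/
def tri (u v : V) : ℕ := (G.neighborFinset u ∩ G.neighborFinset v).card

/-- Unique neighbours `N(u) \ (N(v) ∪ {v})`. -/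
def uniq (u v : V) : Finset V := G.neighborFinset u \ insert v (G.neighborFinset v)

/-- `ξ_u(u,v)`: unique neighbours of `u` having a neighbour among unique neighbours of `v`. -/
def xiSet (u v : V) : Finset V := (uniq G u v).filter fun k => ∃ w ∈ uniq G v u, G.Adj k w

/-- `Ξ_uv`. -/
def Xi (u v : V) : ℕ := (xiSet G u v).card + (xiSet G v u).card

/-- `□̃(k,u,v) = |N(k) ∩ (N(v)\(N(u)∪{u}))|`. -/
def boxT (k u v : V) : ℕ := (G.neighborFinset k ∩ uniq G v u).card

/-- `ϖ_max(u,v)`. -/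
def varpi (u v : V) : ℕ :=
  max (((G.neighborFinset u).erase v).sup fun k => boxT G k u v)
      (((G.neighborFinset v).erase u).sup fun w => boxT G w v u)

/-- `þ_max(u,v) = ϖ_max(u,v)·max{ρ_u,ρ_v}`. -/
def thMax (u v : V) : ℕ := varpi G u v * max (G.degree u) (G.degree v)

/-- Edgewise 4-cycle coefficient `C₄(u,v)`. -/
def C4 (u v : V) : ℝ := if 0 < Xi G u v then (Xi G u v : ℝ) / (thMax G u v : ℝ) else 0

/-- Graph-wide 4-cycle constant `C₄(G)`. -/
def C4Graph : ℝ := sSup {x : ℝ | ∃ u v, G.Adj u v ∧ x = C4 G u v}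

def rhoMin (i j : V) : ℕ := min (G.degree i) (G.degree j)

def rhoMax (i j : V) : ℕ := max (G.degree i) (G.degree j)

/-- `𝔖(i,j)`. -/
def frakS (i j : V) : ℝ := 2 / (G.degree i : ℝ) + 2 / (G.degree j : ℝ) - 2

/-- `𝔗(i,j)`. -/
def frakT (i j : V) : ℝ := 2 / (rhoMax G i j : ℝ) + 1 / (rhoMin G i j : ℝ)

/-- `𝔎(i,j)`. -/
def frakK (i j : V) : ℝ := 1 - 1 / (rhoMin G i j : ℝ) - 1 / (rhoMax G i j : ℝ)

/-- `Z_min(i,j)`. -/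
def Zmin (i j : V) : ℝ := (tri G i j : ℝ) / (rhoMin G i j : ℝ)

/-- `Z_max(i,j)`. -/
def Zmax (i j : V) : ℝ := (tri G i j : ℝ) / (rhoMax G i j : ℝ)

/-- Balanced Forman curvature. -/
def cBF (i j : V) : ℝ :=
  if rhoMin G i j = 1 then 0
  else frakS G i j + frakT G i j * (tri G i j : ℝ) + C4 G i j

/-- `M` is a matching in the cross-edge bipartite graph `B_ij`. -/
def IsCrossMatching (i j : V) (M : Finset (V × V)) : Prop :=
  (∀ p ∈ M, p.1 ∈ uniq G i j ∧ p.2 ∈ uniq G j i ∧ G.Adj p.1 p.2) ∧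
  (∀ p ∈ M, ∀ q ∈ M, p ≠ q → p.1 ≠ q.1 ∧ p.2 ≠ q.2)

/-- Maximum matching size `𝔪(i,j)` in the cross-edge bipartite graph. -/
def matchNum (i j : V) : ℕ :=
  sSup {n : ℕ | ∃ M : Finset (V × V), IsCrossMatching G i j M ∧ M.card = n}

/-- `𝒮(i,j) = 𝔪(i,j)/ρ_max`. -/
def SS (i j : V) : ℝ := (matchNum G i j : ℝ) / (rhoMax G i j : ℝ)

/-- Lazy per-neighbour weight `w_u = (1-α)/ρ_u`. -/
def wA (α : ℝ) (u : V) : ℝ := (1 - α) / (G.degree u : ℝ)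

/-- Lazy conductance sum `Σ`. -/
def SigmaA (αi αj : ℝ) (i j : V) : ℝ :=
  (G.degree i : ℝ) / (1 - αi) + (G.degree j : ℝ) / (1 - αj)

/-- `Const_α`. -/
def ConstA (αi αj : ℝ) (i j : V) : ℝ :=
  -1 + 2 * (min αi ((1 - αj) / (G.degree j : ℝ)) + min αj ((1 - αi) / (G.degree i : ℝ)))
    + (pos (αi - (1 - αj) / (G.degree j : ℝ)) + pos ((1 - αj) / (G.degree j : ℝ) - αi)
      + pos (αj - (1 - αi) / (G.degree i : ℝ)) + pos ((1 - αi) / (G.degree i : ℝ) - αj))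
    + ((G.degree i : ℝ) + (G.degree j : ℝ) - 2) / SigmaA G αi αj i j

/-- `Slope_α`. -/
def SlopeA (αi αj : ℝ) (i j : V) : ℝ := wA G αi i + wA G αj j - 2 / SigmaA G αi αj i j

/-- `α_⋆`: `α_min` when the non-lazy curvature is nonnegative, `α_max` otherwise. -/
def alphaStar (i j : V) : ℝ :=
  if 0 ≤ cOR0 G i j then min (alphaL G i) (alphaL G j) else max (alphaL G i) (alphaL G j)

/-- `Δ_ij(α) = α_max − α_min` for the canonical laziness. -/
def DeltaL (i j : V) : ℝ := max (alphaL G i) (alphaL G j) - min (alphaL G i) (alphaL G j)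

/-!
A coupling `π` of `μ` and `ν` that only moves mass between points with `dist x y ≤ f x + g y`
costs at most `∑ f μ + ∑ g ν`, so it suffices to assemble a plan from pieces with good potentials.

By symmetry let `a = 1/ρ_i ≤ b = 1/ρ_j`. Leave mass `a` in place on every common neighbour and
send mass `a` along every edge of a maximum matching. At the source this leaves mass `a` on `j` and
mass `r = 1 - a - a△ - a𝔪` on the remaining neighbours of `i`; at the target it leaves demand `b`
on `i`, `b - a` on each common neighbour, and `q = 1 - b - b△ - a𝔪` on the remaining neighbours of
`j`. Serve `i` from the neighbours of `i`, and the neighbours of `j` from `j`, as far as possible,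
and couple the excess arbitrarily. Every unit travels at least one step; an excess unit leaving a
neighbour of `i` takes one extra step, and a second one if it ends at a remaining neighbour of `j`.
The extra steps cost `[r - b]₊ + [q - a]₊`, the two brackets of the bound.
-/

theorem min_add_pos_sub (x y : ℝ) : min x y + pos (x - y) = x := by
  unfold pos
  rcases le_total x y with h | h
  · rw [min_eq_left h, max_eq_right (sub_nonpos.2 h), add_zero]
  · rw [min_eq_right h, max_eq_left (sub_nonneg.2 h), add_sub_cancel]

theorem pos_mono : Monotone pos := fun _ _ h => max_le_max_right 0 h

theorem pos_nonneg (x : ℝ) : 0 ≤ pos x := le_max_right x 0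

open Function (support support_add support_const_smul_subset)

section Transport

variable {α : Type*} [Fintype α] {H : SimpleGraph α} {μ ν μ' ν' u : α → ℝ} {π : α → α → ℝ}
  {c c' : ℝ}

theorem IsCoupling.cost_nonneg (hπ : IsCoupling μ ν π) : 0 ≤ cost H π :=
  sum_nonneg fun x _ => sum_nonneg fun y _ => mul_nonneg (Nat.cast_nonneg _) (hπ.1 x y)

theorem IsCoupling.cost_le {f g : α → ℝ} (hπ : IsCoupling μ ν π)
    (hfg : ∀ x y, π x y ≠ 0 → (H.dist x y : ℝ) ≤ f x + g y) :
    cost H π ≤ ∑ x, f x * μ x + ∑ y, g y * ν y := by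
  obtain ⟨hnonneg, hμ, hν⟩ := hπ
  have hterm (x y : α) : (H.dist x y : ℝ) * π x y ≤ (f x + g y) * π x y := by
    by_cases h : π x y = 0
    · simp [h]
    · exact mul_le_mul_of_nonneg_right (hfg x y h) (hnonneg x y)
  calc cost H π ≤ ∑ x, ∑ y, (f x + g y) * π x y :=
        sum_le_sum fun x _ => sum_le_sum fun y _ => hterm x y
    _ = ∑ x, f x * ∑ y, π x y + ∑ y, g y * ∑ x, π x y := by
        simp only [add_mul, sum_add_distrib, mul_sum]
        rw [sum_comm (f := fun x y => g y * π x y)]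
    _ = ∑ x, f x * μ x + ∑ y, g y * ν y := by simp only [hμ, hν]

theorem IsCoupling.add {π' : α → α → ℝ} (hπ : IsCoupling μ ν π) (hπ' : IsCoupling μ' ν' π') :
    IsCoupling (μ + μ') (ν + ν') (π + π') :=
  ⟨fun x y => add_nonneg (hπ.1 x y) (hπ'.1 x y),
    fun x => by simp [sum_add_distrib, hπ.2.1, hπ'.2.1],
    fun y => by simp [sum_add_distrib, hπ.2.2, hπ'.2.2]⟩

theorem IsCoupling.swap (hπ : IsCoupling μ ν π) : IsCoupling ν μ (fun x y => π y x) :=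
  ⟨fun x y => hπ.1 y x, hπ.2.2, hπ.2.1⟩

theorem cost_add (π π' : α → α → ℝ) : cost H (π + π') = cost H π + cost H π' := by
  simp [cost, mul_add, sum_add_distrib]

theorem cost_swap (π : α → α → ℝ) : cost H (fun x y => π y x) = cost H π := by
  unfold cost
  rw [sum_comm]
  simp only [SimpleGraph.dist_comm]

theorem isCoupling_prod (hμ : 0 ≤ μ) (hν : 0 ≤ ν) (hsum : ∑ x, μ x = ∑ x, ν x) :
    IsCoupling μ ν (fun x y => μ x * ν y / ∑ z, μ z) := by
  have eq_zero_of_sum {ρ : α → ℝ} (hρ : 0 ≤ ρ) (h : ∑ z, ρ z = 0) (x : α) : ρ x = 0 :=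
    congrFun ((Fintype.sum_eq_zero_iff_of_nonneg hρ).1 h) x
  refine ⟨fun x y => div_nonneg (mul_nonneg (hμ x) (hν y)) (sum_nonneg fun z _ => hμ z),
    fun x => ?_, fun y => ?_⟩
  · rw [← sum_div, ← mul_sum, ← hsum]
    exact mul_div_cancel_of_imp fun h => eq_zero_of_sum hμ h x
  · rw [← sum_div, ← sum_mul, mul_comm]
    exact mul_div_cancel_of_imp fun h => eq_zero_of_sum hν (hsum ▸ h) y

/-- Some coupling transports `μ` to `ν` at cost at most `c`. The masses of `μ` and `ν` need not
be `1`, so that plans can be assembled from pieces by addition. -/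
def TransportCostLE (H : SimpleGraph α) (μ ν : α → ℝ) (c : ℝ) : Prop :=
  ∃ π, IsCoupling μ ν π ∧ cost H π ≤ c

theorem TransportCostLE.add (h : TransportCostLE H μ ν c) (h' : TransportCostLE H μ' ν' c') :
    TransportCostLE H (μ + μ') (ν + ν') (c + c') := by
  obtain ⟨π, hπ, hcost⟩ := h
  obtain ⟨π', hπ', hcost'⟩ := h'
  exact ⟨π + π', hπ.add hπ', (cost_add π π').trans_le (add_le_add hcost hcost')⟩

theorem TransportCostLE.mono (h : TransportCostLE H μ ν c) (hc : c ≤ c') :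
    TransportCostLE H μ ν c' := by
  obtain ⟨π, hπ, hcost⟩ := h
  exact ⟨π, hπ, hcost.trans hc⟩

theorem TransportCostLE.W1_le (h : TransportCostLE H μ ν c) : W1 H μ ν ≤ c := by
  obtain ⟨π, hπ, hcost⟩ := h
  have hbdd : BddBelow {c | ∃ π, IsCoupling μ ν π ∧ cost H π = c} :=
    ⟨0, by rintro _ ⟨π', hπ', rfl⟩; exact hπ'.cost_nonneg⟩
  exact (csInf_le hbdd ⟨π, hπ, rfl⟩).trans hcost

theorem TransportCostLE.symm (h : TransportCostLE H μ ν c) : TransportCostLE H ν μ c := by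
  obtain ⟨π, hπ, hcost⟩ := h
  exact ⟨_, hπ.swap, (cost_swap π).trans_le hcost⟩

theorem TransportCostLE.sum {ι : Type*} {s : Finset ι} {μ ν : ι → α → ℝ} {c : ι → ℝ}
    (h : ∀ p ∈ s, TransportCostLE H (μ p) (ν p) (c p)) :
    TransportCostLE H (∑ p ∈ s, μ p) (∑ p ∈ s, ν p) (∑ p ∈ s, c p) := by
  induction s using Finset.cons_induction with
  | empty => exact ⟨0, ⟨by simp, by simp, by simp⟩, by simp [cost]⟩
  | cons p s hp ih =>
    simp only [sum_cons]
    exact (h p (mem_cons_self p s)).add (ih fun q hq => h q (mem_cons_of_mem hq))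

theorem transportCostLE_of_dist_le_add {f g : α → ℝ} (hμ : 0 ≤ μ) (hν : 0 ≤ ν)
    (hsum : ∑ x, μ x = ∑ x, ν x)
    (hfg : ∀ x y, μ x ≠ 0 → ν y ≠ 0 → (H.dist x y : ℝ) ≤ f x + g y) :
    TransportCostLE H μ ν (∑ x, f x * μ x + ∑ y, g y * ν y) :=
  have hπ := isCoupling_prod hμ hν hsum
  ⟨_, hπ, hπ.cost_le fun x y h => hfg x y (by rintro h0; simp [h0] at h)
    (by rintro h0; simp [h0] at h)⟩

theorem transportCostLE_of_dist_le {d : ℝ} (hμ : 0 ≤ μ) (hν : 0 ≤ ν)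
    (hsum : ∑ x, μ x = ∑ x, ν x)
    (hd : ∀ x y, μ x ≠ 0 → ν y ≠ 0 → (H.dist x y : ℝ) ≤ d) :
    TransportCostLE H μ ν (d * ∑ x, μ x) := by
  have hplan := transportCostLE_of_dist_le_add (H := H) (f := fun _ => d) (g := 0) hμ hν hsum
    (by simpa using hd)
  simpa [← mul_sum] using hplan

theorem exists_add_eq_sum_eq_min {p : ℝ} (hu : 0 ≤ u) (hp : 0 ≤ p) :
    ∃ w w', 0 ≤ w ∧ 0 ≤ w' ∧ support w ⊆ support u ∧ support w' ⊆ support u ∧ w + w' = u ∧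
      ∑ x, w x = min (∑ x, u x) p ∧ ∑ x, w' x = pos (∑ x, u x - p) := by
  set r := ∑ x, u x
  have hr : 0 ≤ r := sum_nonneg fun x _ => hu x
  have hle : min r p / r ≤ 1 := div_le_one_of_le₀ (min_le_left r p) hr
  have hsum : min r p / r * r = min r p :=
    div_mul_cancel_of_imp fun h => by rw [h, min_eq_left hp]
  refine ⟨(min r p / r) • u, (1 - min r p / r) • u,
    smul_nonneg (div_nonneg (le_min hr hp) hr) hu, smul_nonneg (sub_nonneg.2 hle) hu,
    support_const_smul_subset _ u, support_const_smul_subset _ u, ?_, ?_, ?_⟩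
  · rw [← add_smul, add_sub_cancel, one_smul]
  · simpa only [Pi.smul_apply, smul_eq_mul, ← mul_sum] using hsum
  · simp only [Pi.smul_apply, smul_eq_mul, ← mul_sum]
    linarith [min_add_pos_sub r p]

theorem sum_mul_le_mul_sum_of_support {f w : α → ℝ} {d : ℝ} (hw : 0 ≤ w)
    (hf : ∀ x ∈ support w, f x ≤ d) : ∑ x, f x * w x ≤ d * ∑ x, w x := by
  rw [mul_sum]
  refine sum_le_sum fun x _ => ?_
  by_cases hx : w x = 0
  · simp [hx]
  · exact mul_le_mul_of_nonneg_right (hf x hx) (hw x)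

end Transport

section Dirac

variable {α : Type*} [DecidableEq α]

theorem dirac_nonneg (k : α) : (0 : α → ℝ) ≤ dirac k := fun x => by
  unfold dirac
  split_ifs <;> simp

theorem support_smul_dirac_subset (w : ℝ) (k : α) : support (w • dirac k) ⊆ {k} := by
  intro x hx
  by_contra hne
  simp_all [dirac]

theorem support_add_smul_dirac_subset {u : α → ℝ} {S : Set α} {k : α} (hu : support u ⊆ S)
    (hk : k ∈ S) (w : ℝ) : support (u + w • dirac k) ⊆ S :=
  (support_add _ _).trans (Set.union_subset hu
    ((support_smul_dirac_subset w k).trans (Set.singleton_subset_iff.2 hk)))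

theorem sum_smul_dirac [Fintype α] (w : ℝ) (k : α) : ∑ x, (w • dirac k) x = w := by
  simp [dirac]

theorem transportCostLE_smul_dirac [Fintype α] {w : ℝ} (hw : 0 ≤ w) (H : SimpleGraph α) (x y : α) :
    TransportCostLE H (w • dirac x) (w • dirac y) (H.dist x y * w) := by
  have hplan := transportCostLE_of_dist_le (H := H) (d := H.dist x y)
    (smul_nonneg hw (dirac_nonneg x)) (smul_nonneg hw (dirac_nonneg y))
    (by simp only [sum_smul_dirac]) fun x' y' hx hy => by
      rw [support_smul_dirac_subset w x hx, support_smul_dirac_subset w y hy]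
  rwa [sum_smul_dirac] at hplan

theorem transportCostLE_sum_dirac [Fintype α] {H : SimpleGraph α} {ι : Type*} (s : Finset ι)
    (f g : ι → α) {w : ℝ} (hw : 0 ≤ w) :
    TransportCostLE H (w • ∑ p ∈ s, dirac (f p)) (w • ∑ p ∈ s, dirac (g p))
      ((∑ p ∈ s, (H.dist (f p) (g p) : ℝ)) * w) := by
  rw [smul_sum, smul_sum, sum_mul]
  exact .sum fun p _ => transportCostLE_smul_dirac hw H (f p) (g p)

/-- The counting measure of a finite set of vertices, as a mass function. -/
def counting (A : Finset α) : α → ℝ := ∑ k ∈ A, dirac k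

theorem counting_apply (A : Finset α) (x : α) : counting A x = if x ∈ A then 1 else 0 := by
  simp [counting, dirac, Finset.sum_apply]

theorem counting_nonneg (A : Finset α) : 0 ≤ counting A := sum_nonneg fun k _ => dirac_nonneg k

theorem sum_smul_counting [Fintype α] (w : ℝ) (A : Finset α) :
    ∑ x, (w • counting A) x = #A * w := by
  simp [counting_apply]

theorem support_smul_counting_subset (w : ℝ) (A : Finset α) : support (w • counting A) ⊆ A := by
  intro x hx
  by_contra hne
  simp_all [counting_apply]

theorem transportCostLE_smul_counting_self [Fintype α] (H : SimpleGraph α) (A : Finset α) {w : ℝ}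
    (hw : 0 ≤ w) : TransportCostLE H (w • counting A) (w • counting A) 0 := by
  simpa [counting] using transportCostLE_sum_dirac (H := H) A id id hw

end Dirac

section Edge

variable {α : Type*} {H : SimpleGraph α} {i j x y : α}

theorem dist_le_two (hxi : H.Adj x i) (hiy : H.Adj i y) : H.dist x y ≤ 2 :=
  H.dist_le (.cons hxi (.cons hiy .nil))

theorem dist_le_three (hxi : H.Adj x i) (hij : H.Adj i j) (hjy : H.Adj j y) : H.dist x y ≤ 3 :=
  H.dist_le (.cons hxi (.cons hij (.cons hjy .nil)))

open Classical in
theorem dist_le_across_edge (hij : H.Adj i j) (hix : H.Adj i x) (hjy : H.Adj j y) :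
    (H.dist x y : ℝ) ≤ (if x = j then 1 else 2) + (if y = i ∨ H.Adj i y then 0 else 1) := by
  by_cases hxj : x = j
  · subst hxj
    rw [SimpleGraph.dist_eq_one_iff_adj.2 hjy]
    split_ifs <;> norm_num
  rw [if_neg hxj]
  split_ifs with hy
  · rcases hy with rfl | hiy
    · rw [SimpleGraph.dist_eq_one_iff_adj.2 hix.symm]
      norm_num
    · exact_mod_cast dist_le_two hix.symm hiy
  · exact_mod_cast dist_le_three hix.symm hij hjy

variable [Fintype α] [DecidableEq α] {u v c : α → ℝ} {s t a b : ℝ}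

theorem transportCostLE_neighbors_to_dirac (hu : 0 ≤ u) (hu_supp : support u ⊆ H.neighborSet i) :
    TransportCostLE H u ((∑ x, u x) • dirac i) (∑ x, u x) := by
  have hplan := transportCostLE_of_dist_le (H := H) (d := 1) hu
    (smul_nonneg (sum_nonneg fun x _ => hu x) (dirac_nonneg i))
    (sum_smul_dirac (∑ x, u x) i).symm fun x y hx hy => by
      rw [support_smul_dirac_subset _ i hy,
        SimpleGraph.dist_eq_one_iff_adj.2 (SimpleGraph.Adj.symm (hu_supp hx)), Nat.cast_one]
  rwa [one_mul] at hplan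

theorem transportCostLE_excess_across_edge (hij : H.Adj i j) (hu : 0 ≤ u) (hv : 0 ≤ v)
    (hc : 0 ≤ c) (hs : 0 ≤ s) (ht : 0 ≤ t) (hu_supp : support u ⊆ H.neighborSet i)
    (hv_supp : support v ⊆ H.neighborSet j) (hc_supp : support c ⊆ H.commonNeighbors i j)
    (hmass : ∑ x, u x + s = ∑ y, v y + ∑ y, c y + t) :
    TransportCostLE H (u + s • dirac j) (v + c + t • dirac i)
      (2 * ∑ x, u x + s + ∑ y, v y) := by
  classical
  let f (x : α) : ℝ := if x = j then 1 else 2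
  let g (y : α) : ℝ := if y = i ∨ H.Adj i y then 0 else 1
  have hs_nonneg : 0 ≤ s • dirac j := smul_nonneg hs (dirac_nonneg j)
  have ht_nonneg : 0 ≤ t • dirac i := smul_nonneg ht (dirac_nonneg i)
  have hsource : support (u + s • dirac j) ⊆ H.neighborSet i :=
    support_add_smul_dirac_subset hu_supp hij s
  have hvc_supp : support (v + c) ⊆ H.neighborSet j :=
    (support_add _ _).trans (Set.union_subset hv_supp (hc_supp.trans Set.inter_subset_right))
  have htarget : support (v + c + t • dirac i) ⊆ H.neighborSet j :=
    support_add_smul_dirac_subset hvc_supp hij.symm t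
  have hfu : ∑ x, f x * u x ≤ 2 * ∑ x, u x :=
    sum_mul_le_mul_sum_of_support hu fun x _ => by dsimp only [f]; split_ifs <;> norm_num
  have hfs : ∑ x, f x * (s • dirac j) x ≤ 1 * ∑ x, (s • dirac j) x :=
    sum_mul_le_mul_sum_of_support hs_nonneg fun x hx => by
      simp [f, Set.mem_singleton_iff.1 (support_smul_dirac_subset s j hx)]
  have hgv : ∑ y, g y * v y ≤ 1 * ∑ y, v y :=
    sum_mul_le_mul_sum_of_support hv fun y _ => by dsimp only [g]; split_ifs <;> norm_num
  have hgc : ∑ y, g y * c y ≤ 0 * ∑ y, c y :=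
    sum_mul_le_mul_sum_of_support hc fun y hy => by
      have hiy : H.Adj i y := (hc_supp hy).1
      simp [g, hiy]
  have hgt : ∑ y, g y * (t • dirac i) y ≤ 0 * ∑ y, (t • dirac i) y :=
    sum_mul_le_mul_sum_of_support ht_nonneg fun y hy => by
      simp [g, Set.mem_singleton_iff.1 (support_smul_dirac_subset t i hy)]
  refine (transportCostLE_of_dist_le_add (f := f) (g := g) (add_nonneg hu hs_nonneg)
    (add_nonneg (add_nonneg hv hc) ht_nonneg) ?_ fun x y hx hy => ?_).mono ?_
  · simpa only [Pi.add_apply, sum_add_distrib, sum_smul_dirac] using hmass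
  · convert dist_le_across_edge hij (hsource hx) (htarget hy)
  · rw [sum_smul_dirac] at hfs
    simp only [Pi.add_apply, mul_add, sum_add_distrib]
    linarith

theorem transportCostLE_across_edge (hij : H.Adj i j) (hu : 0 ≤ u) (hv : 0 ≤ v) (hc : 0 ≤ c)
    (ha : 0 ≤ a) (hb : 0 ≤ b) (hu_supp : support u ⊆ H.neighborSet i)
    (hv_supp : support v ⊆ H.neighborSet j) (hc_supp : support c ⊆ H.commonNeighbors i j)
    (hmass : ∑ x, u x + a = ∑ y, v y + ∑ y, c y + b) :
    TransportCostLE H (u + a • dirac j) (v + c + b • dirac i)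
      (∑ x, u x + a + pos (∑ x, u x - b) + pos (∑ y, v y - a)) := by
  obtain ⟨u₁, u₂, hu₁, hu₂, hu₁_supp, hu₂_supp, hu_eq, hu₁_sum, hu₂_sum⟩ :=
    exists_add_eq_sum_eq_min hu hb
  obtain ⟨v₁, v₂, hv₁, hv₂, hv₁_supp, hv₂_supp, hv_eq, hv₁_sum, hv₂_sum⟩ :=
    exists_add_eq_sum_eq_min hv ha
  have hu_split := min_add_pos_sub (∑ x, u x) b
  have hv_split := min_add_pos_sub (∑ y, v y) a
  have ha_split := min_add_pos_sub a (∑ y, v y)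
  have hb_split := min_add_pos_sub b (∑ x, u x)
  rw [min_comm, ← hv₁_sum] at ha_split
  rw [min_comm, ← hu₁_sum] at hb_split
  have to_i := transportCostLE_neighbors_to_dirac hu₁ (hu₁_supp.trans hu_supp)
  have from_j := (transportCostLE_neighbors_to_dirac hv₁ (hv₁_supp.trans hv_supp)).symm
  have excess := transportCostLE_excess_across_edge hij hu₂ hv₂ hc (pos_nonneg (a - ∑ y, v y))
    (pos_nonneg (b - ∑ x, u x)) (hu₂_supp.trans hu_supp) (hv₂_supp.trans hv_supp) hc_supp
    (by linarith)
  have hsource : u + a • dirac j =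
      u₁ + (∑ y, v₁ y) • dirac j + (u₂ + pos (a - ∑ y, v y) • dirac j) := by
    rw [add_add_add_comm, hu_eq, ← add_smul, ha_split]
  have htarget : v + c + b • dirac i =
      (∑ x, u₁ x) • dirac i + v₁ + (v₂ + c + pos (b - ∑ x, u x) • dirac i) := by
    rw [← hv_eq]
    nth_rw 1 [← hb_split]
    rw [add_smul]
    abel
  rw [hsource, htarget]
  exact ((to_i.add from_j).add excess).mono (by linarith)

end Edge

section Curvature

variable {G} {i j : V} {M : Finset (V × V)}

theorem exists_isCrossMatching_card_eq_matchNum (G : SimpleGraph V) [DecidableRel G.Adj]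
    (i j : V) : ∃ M, IsCrossMatching G i j M ∧ #M = matchNum G i j := by
  refine Nat.sSup_mem (s := {n | ∃ M, IsCrossMatching G i j M ∧ #M = n})
    ⟨0, ∅, ⟨by simp, by simp⟩, rfl⟩ ⟨Fintype.card (V × V), ?_⟩
  rintro _ ⟨M, _, rfl⟩
  exact card_le_univ M

theorem IsCrossMatching.swap (hM : IsCrossMatching G i j M) :
    IsCrossMatching G j i (M.map (Equiv.prodComm V V).toEmbedding) := by
  simp only [IsCrossMatching, Finset.forall_mem_map, Equiv.coe_toEmbedding,
    Equiv.prodComm_apply, Prod.fst_swap, Prod.snd_swap, ne_eq, Prod.swap_inj]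
  exact ⟨fun p hp => ⟨(hM.1 p hp).2.1, (hM.1 p hp).1, (hM.1 p hp).2.2.symm⟩,
    fun p hp q hq hne => (hM.2 p hp q hq hne).symm⟩

theorem IsCrossMatching.injOn_fst (hM : IsCrossMatching G i j M) :
    Set.InjOn Prod.fst (M : Set (V × V)) :=
  fun p hp q hq h => by_contra fun hne => (hM.2 p hp q hq hne).1 h

theorem IsCrossMatching.injOn_snd (hM : IsCrossMatching G i j M) :
    Set.InjOn Prod.snd (M : Set (V × V)) :=
  fun p hp q hq h => by_contra fun hne => (hM.2 p hp q hq hne).2 h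

theorem IsCrossMatching.transportCostLE (hM : IsCrossMatching G i j M) {w : ℝ} (hw : 0 ≤ w) :
    TransportCostLE G (w • counting (M.image Prod.fst)) (w • counting (M.image Prod.snd))
      (#M * w) := by
  have hdist : ∑ p ∈ M, (G.dist p.1 p.2 : ℝ) = #M := by
    rw [sum_congr rfl fun p hp => by rw [SimpleGraph.dist_eq_one_iff_adj.2 (hM.1 p hp).2.2]]
    simp
  rw [counting, counting, sum_image hM.injOn_fst, sum_image hM.injOn_snd, ← hdist]
  exact transportCostLE_sum_dirac M Prod.fst Prod.snd hw

theorem unif_eq_smul_counting (G : SimpleGraph V) [DecidableRel G.Adj] (i : V) :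
    unif G i = (G.degree i : ℝ)⁻¹ • counting (G.neighborFinset i) := by
  ext x
  simp [unif, counting_apply]

theorem sum_unif {α : Type*} [Fintype α] {H : SimpleGraph α} [DecidableRel H.Adj] {k : α}
    (hk : 0 < H.degree k) : ∑ x, unif H k x = 1 := by
  classical
  rw [unif_eq_smul_counting, sum_smul_counting, H.card_neighborFinset_eq_degree,
    mul_inv_cancel₀ (Nat.cast_ne_zero.2 hk.ne')]

theorem counting_common_add_uniq_add_dirac_le (hij : G.Adj i j) {F : Finset V}
    (hF : F ⊆ uniq G i j) :
    counting (G.neighborFinset i ∩ G.neighborFinset j) + counting F + dirac j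
      ≤ counting (G.neighborFinset i) := by
  intro x
  have hx := @hF x
  simp only [uniq, mem_sdiff, mem_insert, SimpleGraph.mem_neighborFinset] at hx
  simp only [Pi.add_apply, counting_apply, dirac, mem_inter, SimpleGraph.mem_neighborFinset]
  split_ifs <;> simp_all

/-- What remains of `unif G i` after removing all mass on the common neighbours of `i` and `j`,
all mass on `j`, and mass `w` from every vertex of `F`. Here `F ⊆ uniq G i j` is the part of a
matching on the side of `i` and `w` is the mass sent along each of its edges. -/
def remainder (G : SimpleGraph V) [DecidableRel G.Adj] (i j : V) (F : Finset V) (w : ℝ) : V → ℝ :=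
  unif G i - ((G.degree i : ℝ)⁻¹ • counting (G.neighborFinset i ∩ G.neighborFinset j)
    + w • counting F + (G.degree i : ℝ)⁻¹ • dirac j)

variable {F : Finset V} {w : ℝ}

theorem remainder_nonneg (hij : G.Adj i j) (hF : F ⊆ uniq G i j)
    (hw : w ≤ (G.degree i : ℝ)⁻¹) : 0 ≤ remainder G i j F w := by
  have hdeg : 0 ≤ (G.degree i : ℝ)⁻¹ := inv_nonneg.2 (Nat.cast_nonneg _)
  refine sub_nonneg.2 ?_
  calc _ ≤ (G.degree i : ℝ)⁻¹ •
        (counting (G.neighborFinset i ∩ G.neighborFinset j) + counting F + dirac j) := by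
        rw [smul_add, smul_add]
        gcongr
        exact counting_nonneg F
    _ ≤ unif G i := by
        rw [unif_eq_smul_counting]
        exact smul_le_smul_of_nonneg_left (counting_common_add_uniq_add_dirac_le hij hF) hdeg

theorem support_remainder_subset (hij : G.Adj i j) (hF : F ⊆ uniq G i j) :
    support (remainder G i j F w) ⊆ G.neighborSet i := by
  intro x hx
  by_contra hix
  have hxF : x ∉ F := fun h => hix (by simpa using (mem_sdiff.1 (hF h)).1)
  have hxj : x ≠ j := fun h => hix (h ▸ hij)
  rw [SimpleGraph.mem_neighborSet] at hix
  simp [remainder, unif, counting_apply, dirac, hix, hxF, hxj] at hx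

theorem sum_remainder (hij : G.Adj i j) :
    ∑ x, remainder G i j F w x
      = 1 - 1 / G.degree i - tri G i j / G.degree i - #F * w := by
  simp only [remainder, Pi.sub_apply, Pi.add_apply, sum_sub_distrib, sum_add_distrib,
    sum_smul_dirac, sum_unif hij.degree_pos_left, sum_smul_counting, tri]
  ring

theorem IsCrossMatching.image_fst_subset (hM : IsCrossMatching G i j M) :
    M.image Prod.fst ⊆ uniq G i j :=
  image_subset_iff.2 fun p hp => (hM.1 p hp).1

theorem IsCrossMatching.image_snd_subset (hM : IsCrossMatching G i j M) :
    M.image Prod.snd ⊆ uniq G j i :=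
  image_subset_iff.2 fun p hp => (hM.1 p hp).2.1

theorem tri_comm (G : SimpleGraph V) [DecidableRel G.Adj] (i j : V) : tri G i j = tri G j i := by
  rw [tri, tri, inter_comm]

theorem IsCrossMatching.transportCostLE_remainder (hM : IsCrossMatching G i j M)
    (hij : G.Adj i j) {a b : ℝ} (ha : a = (G.degree i : ℝ)⁻¹) (hb : b = (G.degree j : ℝ)⁻¹)
    (hab : a ≤ b) :
    TransportCostLE G (remainder G i j (M.image Prod.fst) a + a • dirac j)
      (remainder G j i (M.image Prod.snd) a
        + (b - a) • counting (G.neighborFinset i ∩ G.neighborFinset j) + b • dirac i)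
      (1 - tri G i j * a - #M * a + pos (1 - b - a - tri G i j * a - #M * a)
        + pos (1 - b - a - tri G i j * b - #M * a)) := by
  set K := G.neighborFinset i ∩ G.neighborFinset j with hK
  have ha_nonneg : 0 ≤ a := ha ▸ inv_nonneg.2 (Nat.cast_nonneg _)
  have hu_sum : ∑ x, remainder G i j (M.image Prod.fst) a x
      = 1 - a - tri G i j * a - #M * a := by
    rw [sum_remainder hij, card_image_of_injOn hM.injOn_fst, one_div, div_eq_mul_inv, ← ha]
  have hv_sum : ∑ y, remainder G j i (M.image Prod.snd) a y
      = 1 - b - tri G i j * b - #M * a := by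
    rw [sum_remainder hij.symm, card_image_of_injOn hM.injOn_snd, one_div, div_eq_mul_inv, ← hb,
      tri_comm]
  have hc_sum : ∑ y, ((b - a) • counting K) y = tri G i j * (b - a) := sum_smul_counting _ _
  have hc_supp : support ((b - a) • counting K) ⊆ G.commonNeighbors i j :=
    (support_smul_counting_subset (b - a) K).trans (by simp [hK, SimpleGraph.commonNeighbors])
  refine (transportCostLE_across_edge hij
    (remainder_nonneg hij hM.image_fst_subset ha.le)
    (remainder_nonneg hij.symm hM.image_snd_subset (hab.trans hb.le))
    (smul_nonneg (sub_nonneg.2 hab) (counting_nonneg K)) ha_nonneg (ha_nonneg.trans hab)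
    (support_remainder_subset hij hM.image_fst_subset)
    (support_remainder_subset hij.symm hM.image_snd_subset) hc_supp ?_).mono (le_of_eq ?_)
  · rw [hu_sum, hv_sum, hc_sum]
    ring
  · rw [hu_sum, hv_sum]
    ring_nf

theorem IsCrossMatching.transportCostLE_unif (hM : IsCrossMatching G i j M) (hij : G.Adj i j)
    (hdeg : G.degree j ≤ G.degree i) :
    TransportCostLE G (unif G i) (unif G j)
      (1 - tri G i j / G.degree i
        + pos (1 - 1 / G.degree j - 1 / G.degree i - tri G i j / G.degree i - #M / G.degree i)
        + pos (1 - 1 / G.degree j - 1 / G.degree i - tri G i j / G.degree j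
          - #M / G.degree i)) := by
  simp only [div_eq_mul_inv, one_mul]
  set a : ℝ := (G.degree i : ℝ)⁻¹ with ha
  set b : ℝ := (G.degree j : ℝ)⁻¹ with hb
  set K := G.neighborFinset i ∩ G.neighborFinset j
  have ha_nonneg : 0 ≤ a := inv_nonneg.2 (Nat.cast_nonneg _)
  have hab : a ≤ b :=
    inv_anti₀ (Nat.cast_pos.2 hij.symm.degree_pos_left) (Nat.cast_le.2 hdeg)
  have stay := transportCostLE_smul_counting_self G K ha_nonneg
  have matched := hM.transportCostLE ha_nonneg
  have across := hM.transportCostLE_remainder hij ha hb hab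
  have hsource : unif G i = a • counting K + a • counting (M.image Prod.fst)
      + (remainder G i j (M.image Prod.fst) a + a • dirac j) := by
    rw [remainder]
    abel
  have htarget : unif G j = a • counting K + a • counting (M.image Prod.snd)
      + (remainder G j i (M.image Prod.snd) a + (b - a) • counting K + b • dirac i) := by
    rw [remainder, inter_comm, sub_smul]
    abel
  rw [hsource, htarget]
  exact ((stay.add matched).add across).mono (by linarith)

theorem W1_unif_le (hij : G.Adj i j) :
    W1 G (unif G i) (unif G j) ≤
      1 - Zmax G i j + pos (frakK G i j - Zmax G i j - SS G i j)
        + pos (frakK G i j - Zmin G i j - SS G i j) := by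
  obtain ⟨M, hM, hcard⟩ := exists_isCrossMatching_card_eq_matchNum G i j
  unfold frakK Zmax Zmin SS rhoMin rhoMax
  rw [← hcard]
  rcases le_total (G.degree j) (G.degree i) with hdeg | hdeg
  · rw [max_eq_left hdeg, min_eq_right hdeg]
    exact (hM.transportCostLE_unif hij hdeg).W1_le
  · rw [max_eq_right hdeg, min_eq_left hdeg, tri_comm, ← card_map (Equiv.prodComm V V).toEmbedding]
    exact (hM.swap.transportCostLE_unif hij.symm hdeg).symm.W1_le

end Curvature

theorem stmt10_general (i j : V) (hij : G.Adj i j) :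
    (cOR0 G i j ≥
      -(pos (frakK G i j - Zmax G i j - SS G i j))
        - pos (frakK G i j - Zmin G i j - SS G i j) + Zmax G i j) ∧
    (∀ s t : ℝ, s ≤ t →
      -(pos (frakK G i j - Zmax G i j - s)) - pos (frakK G i j - Zmin G i j - s) + Zmax G i j
        ≤ -(pos (frakK G i j - Zmax G i j - t)) - pos (frakK G i j - Zmin G i j - t)
          + Zmax G i j) := by
  constructor
  · have hW1 := W1_unif_le hij
    unfold cOR0
    linarith
  · intro s t hst
    gcongr <;> exact pos_mono (by gcongr)

/-- quadrangle-augmented Jost–Liu lower bound for the non-lazy curvature,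
and monotonicity of the bound in the matching statistic. -/
theorem stmt10 (hG : G.Connected) (i j : V) (hij : G.Adj i j) :
    (cOR0 G i j ≥
      -(pos (frakK G i j - Zmax G i j - SS G i j))
        - pos (frakK G i j - Zmin G i j - SS G i j) + Zmax G i j) ∧
    (∀ s t : ℝ, s ≤ t →
      -(pos (frakK G i j - Zmax G i j - s)) - pos (frakK G i j - Zmin G i j - s) + Zmax G i j
        ≤ -(pos (frakK G i j - Zmax G i j - t)) - pos (frakK G i j - Zmin G i j - t)
          + Zmax G i j) :=
  stmt10_general G i j hij

end

end Curv
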